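/- Let f ∈ ℂ[x_0,…,x_n]_d with V(f) not a cone, let A = A(f), and let k ≤ ⌊d/2⌋ be the greatest integer such that the multiplication map ×L : A_{k−1} → A_k is injective for some L ∈ A_1. Then for every j ≤ k: if there do not exist n+1 algebraically independent elements (over ℂ) among the j-th order partial derivatives {∂^α f : |α| = j} (i.e., the j-th polar map is degenerate), then the j-th Hessian determinant hess^j_f vanishes identically. -/

import Mathlib

/-!
Write `L_x = ∑ xᵢ Xᵢ` for a point `x`, and suppose that `hess^j_f ≠ 0`; the claim is that `n + 1` of
the `j`-th partials are algebraically independent.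

If `×L : A_{k-1} → A_k` is injective, then so is `×L` in all lower degrees (`mul_injective_lower`),
hence `×L^{j-1} : A_1 → A_j` is injective for `j ≤ k`.  This is an open condition on `L`, so there
is a point `x` with `hess^j_f(x) ≠ 0` and `×L_x^{j-1} : A_1 → A_j` injective
(`exists_generic_point`).

At such an `x` the Jacobian of the `j`-th polar map has trivial kernel.  Indeed, let `v ∈ Q_1` with
`(v B(f))(x) = 0` for all `B ∈ Q_j`.  By Euler's identity, applying `L_x` to a form multiplies its
value at `x` by a scalar, so `w = L_x^{j-1} v ∈ Q_j` satisfies `(w B(f))(x) = 0` for all `B ∈ Q_j`: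
the class of `w` lies in the kernel of `Hess^j_f(x)`.  Thus `w = 0` in `A_j`, and `v = 0` by
injectivity and because `V(f)` is not a cone.

Hence some `n + 1` of the `j`-th partials have linearly independent gradients at `x`, and they are
algebraically independent by the Jacobian criterion (`algebraicIndependent_of_jacobian`).
-/

open MvPolynomial Module

/-- The differential operator `∂^α` on `ℂ[x_0,…,x_{N-1}]` given by a multi-index
`α : Fin N → ℕ`. -/
noncomputable def pd {N : ℕ} (α : Fin N → ℕ) :
    Module.End ℂ (MvPolynomial (Fin N) ℂ) :=
  (List.ofFn fun i =>
    ((MvPolynomial.pderiv (R := ℂ) i).toLinearMap :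
      Module.End ℂ (MvPolynomial (Fin N) ℂ)) ^ (α i)).prod

/-- Apolarity action: the `ℂ`-linear map `q ↦ q(f)` sending a differential operator
`q ∈ Q = ℂ[X_0,…,X_n]` to its action on `f`; it sends the monomial `X^α` to `∂^α f`. -/
noncomputable def DopL {N : ℕ} (f : MvPolynomial (Fin N) ℂ) :
    MvPolynomial (Fin N) ℂ →ₗ[ℂ] MvPolynomial (Fin N) ℂ :=
  (MvPolynomial.basisMonomials (Fin N) ℂ).constr ℂ (fun α => pd (fun i => α i) f)

/-- "Multiplication by some linear form `L` is injective from `A(f)_{j-1}` to `A(f)_j`":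
there is `L ∈ Q_1` such that for all `q ∈ Q_{j-1}`, `Lq ∈ Ann(f)` implies `q ∈ Ann(f)`. -/
def mulLinInjective {N : ℕ} (f : MvPolynomial (Fin N) ℂ) (j : ℕ) : Prop :=
  ∃ L ∈ homogeneousSubmodule (Fin N) ℂ 1,
    ∀ q ∈ homogeneousSubmodule (Fin N) ℂ (j - 1),
      DopL f (L * q) = 0 → DopL f q = 0

/-! ### The action of differential operators -/

lemma list_prod_pow_add {M : Type*} [Monoid M] : ∀ {N : ℕ} (u : Fin N → M)
    (_ : ∀ i j, Commute (u i) (u j)) (α β : Fin N → ℕ),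
    (List.ofFn fun i => u i ^ (α i + β i)).prod =
      (List.ofFn fun i => u i ^ α i).prod * (List.ofFn fun i => u i ^ β i).prod
  | 0, _, _, _, _ => by simp
  | N + 1, u, hu, α, β => by
    have ih := list_prod_pow_add (fun i : Fin N => u i.succ) (fun i j => hu _ _)
      (fun i => α i.succ) (fun i => β i.succ)
    have hc : Commute (u 0 ^ β 0) (List.ofFn fun i : Fin N => u i.succ ^ α i.succ).prod := by
      apply Commute.list_prod_right
      intro y hy
      obtain ⟨i, rfl⟩ := (List.mem_ofFn' _ _).1 hy
      exact (hu _ _).pow_pow _ _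
    simp only [List.ofFn_succ, List.prod_cons, ih]
    rw [pow_add]
    simp only [mul_assoc]
    rw [← mul_assoc (u 0 ^ β 0), hc.eq, mul_assoc]

lemma pderiv_commute {N : ℕ} (i j : Fin N) (p : MvPolynomial (Fin N) ℂ) :
    pderiv i (pderiv j p) = pderiv j (pderiv i p) := by
  ext m
  rcases eq_or_ne i j with rfl | h
  · rfl
  · simp only [coeff_pderiv, Finsupp.add_apply, Finsupp.single_eq_of_ne h,
      Finsupp.single_eq_of_ne h.symm, add_right_comm m (Finsupp.single i 1)]
    push_cast
    ring

lemma pd_add {N : ℕ} (α β : Fin N → ℕ) (f : MvPolynomial (Fin N) ℂ) :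
    pd (fun i => α i + β i) f = pd α (pd β f) := by
  rw [← Module.End.mul_apply]
  unfold pd
  rw [list_prod_pow_add]
  intro i j
  apply LinearMap.ext
  intro p
  exact pderiv_commute i j p

lemma DopL_monomial {N : ℕ} (f : MvPolynomial (Fin N) ℂ) (α : Fin N →₀ ℕ) (c : ℂ) :
    DopL f (monomial α c) = c • pd (fun i => α i) f := by
  have h : monomial α c = c • (basisMonomials (Fin N) ℂ) α := by
    simp [smul_monomial]
  rw [h, map_smul, DopL, Basis.constr_basis]

/-- `R` is a module over the ring `Q` of differential operators: `(pq)(f) = p(q(f))`. -/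
lemma DopL_mul {N : ℕ} (f p q : MvPolynomial (Fin N) ℂ) :
    DopL f (p * q) = DopL (DopL f q) p := by
  induction p using MvPolynomial.induction_on' with
  | add p₁ p₂ h₁ h₂ => rw [add_mul, map_add, map_add, h₁, h₂]
  | monomial α a =>
    rw [DopL_monomial]
    induction q using MvPolynomial.induction_on' with
    | add q₁ q₂ h₁ h₂ => rw [mul_add, map_add, map_add, map_add, smul_add, h₁, h₂]
    | monomial β b =>
      rw [monomial_mul, DopL_monomial, DopL_monomial, map_smul, smul_smul]
      congr 1
      exact pd_add _ _ _

lemma DopL_X {N : ℕ} (f : MvPolynomial (Fin N) ℂ) (i : Fin N) :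
    DopL f (X i) = pderiv i f := by
  rw [X, DopL_monomial, one_smul, pd]
  have h : ∀ {M : Type} [Monoid M] {N : ℕ} (u : Fin N → M) (i : Fin N),
      (List.ofFn fun l => u l ^ (Finsupp.single i 1 : Fin N →₀ ℕ) l).prod = u i := by
    intro M _ N u i
    have h2 : (fun l => u l ^ (Finsupp.single i 1 : Fin N →₀ ℕ) l) =
        Pi.mulSingle i (u i) := by
      funext l
      rcases eq_or_ne l i with rfl | hl
      · simp
      · simp [hl]
    rw [h2]
    clear h2
    induction N with
    | zero => exact i.elim0
    | succ N ih =>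
      rw [List.ofFn_succ, List.prod_cons]
      refine Fin.cases ?_ (fun i => ?_) i
      · simp
      · have : (fun l : Fin N => (Pi.mulSingle i.succ (u i.succ) : Fin (N + 1) → M) l.succ)
            = Pi.mulSingle i ((fun l : Fin N => u l.succ) i) := by
          funext l
          simp [Pi.mulSingle_apply]
        rw [this, ih (fun l : Fin N => u l.succ) i]
        simp [(Fin.succ_ne_zero i).symm]
  rw [h]
  rfl

lemma DopL_one {N : ℕ} (f : MvPolynomial (Fin N) ℂ) : DopL f 1 = f := by
  rw [← C_1, C_apply, DopL_monomial, one_smul, pd]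
  simp

lemma DopL_X_mul {N : ℕ} (f q : MvPolynomial (Fin N) ℂ) (i : Fin N) :
    DopL f (X i * q) = pderiv i (DopL f q) := by
  rw [DopL_mul, DopL_X]

/-- The linear form `∑ xᵢ Xᵢ ∈ Q₁`, that is, the derivative in the direction `x`. -/
noncomputable def linForm {N : ℕ} : (Fin N → ℂ) →ₗ[ℂ] MvPolynomial (Fin N) ℂ :=
  Fintype.linearCombination ℂ X

lemma linForm_apply {N : ℕ} (x : Fin N → ℂ) : linForm x = ∑ i, x i • X i :=
  Fintype.linearCombination_apply ..

lemma linForm_mem {N : ℕ} (x : Fin N → ℂ) : linForm x ∈ homogeneousSubmodule (Fin N) ℂ 1 := by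
  rw [linForm_apply]
  exact Submodule.sum_mem _ fun i _ => Submodule.smul_mem _ _ (isHomogeneous_X ℂ i)

lemma exists_linForm {N : ℕ} {L : MvPolynomial (Fin N) ℂ}
    (hL : L ∈ homogeneousSubmodule (Fin N) ℂ 1) : ∃ x, linForm x = L := by
  rw [homogeneousSubmodule_one_eq_span_X, ← Fintype.range_linearCombination] at hL
  exact hL

lemma linForm_injective {N : ℕ} {x : Fin N → ℂ} (h : linForm x = 0) : x = 0 := by
  funext i
  have := congrArg (eval (Pi.single i 1)) h
  simpa [linForm_apply, smul_eval, Pi.single_apply] using this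

lemma DopL_linForm {N : ℕ} (g : MvPolynomial (Fin N) ℂ) (v : Fin N → ℂ) :
    DopL g (linForm v) = ∑ i, v i • pderiv i g := by
  simp [linForm_apply, DopL_X]

lemma DopL_homogeneous {N i d : ℕ} {f q : MvPolynomial (Fin N) ℂ} (hf : f.IsHomogeneous d)
    (hq : q ∈ homogeneousSubmodule (Fin N) ℂ i) : (DopL f q).IsHomogeneous (d - i) := by
  rw [← homogeneousSubmodule_one_pow] at hq
  induction i generalizing q with
  | zero =>
    rw [pow_zero, Submodule.mem_one] at hq
    obtain ⟨c, rfl⟩ := hq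
    rw [Algebra.algebraMap_eq_smul_one, map_smul, DopL_one]
    exact (homogeneousSubmodule (Fin N) ℂ d).smul_mem _ hf
  | succ i ih =>
    rw [pow_succ'] at hq
    refine Submodule.mul_induction_on hq (fun L hL q hq => ?_) (fun p q hp hq => ?_)
    · obtain ⟨x, rfl⟩ := exists_linForm hL
      rw [DopL_mul, DopL_linForm]
      refine IsHomogeneous.sum _ _ _ fun l _ => ?_
      exact (homogeneousSubmodule (Fin N) ℂ _).smul_mem _ (ih hq).pderiv
    · rw [map_add]
      exact hp.add hq

lemma DopL_mem_span {N j : ℕ} (f : MvPolynomial (Fin N) ℂ) {q : MvPolynomial (Fin N) ℂ}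
    (hq : q ∈ homogeneousSubmodule (Fin N) ℂ j) :
    DopL f q ∈ Submodule.span ℂ {h | ∃ α : Fin N → ℕ, (∑ t, α t) = j ∧ h = pd α f} := by
  rw [q.as_sum, map_sum]
  refine Submodule.sum_mem _ fun α hα => ?_
  rw [DopL_monomial]
  refine Submodule.smul_mem _ _ (Submodule.subset_span ⟨_, ?_, rfl⟩)
  have := IsHomogeneous.degree_eq_sum_deg_support hq hα
  rw [this]
  exact (Finsupp.degree_eq_sum α).symm

/-! ### Euler's identity -/

lemma eval_DopL_linForm {N e : ℕ} {g : MvPolynomial (Fin N) ℂ} (hg : g.IsHomogeneous e)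
    (x : Fin N → ℂ) : eval x (DopL g (linForm x)) = e * eval x g := by
  have := congrArg (eval x) hg.sum_X_mul_pderiv
  simpa [DopL_linForm, smul_eval] using this

/-- By Euler's identity, differentiating a homogeneous `g` in the direction of the point `x` itself
multiplies the value at `x` by a scalar, so a zero of `g` stays a zero. -/
lemma eval_DopL_linForm_pow {N e : ℕ} {g : MvPolynomial (Fin N) ℂ} (hg : g.IsHomogeneous e)
    (x : Fin N → ℂ) (hx : eval x g = 0) (m : ℕ) : eval x (DopL g (linForm x ^ m)) = 0 := by
  induction m with
  | zero => simpa [DopL_one] using hx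
  | succ m ih =>
    have hp : linForm x ^ m ∈ homogeneousSubmodule (Fin N) ℂ m := by
      simpa using IsHomogeneous.pow (linForm_mem x) m
    rw [pow_succ', DopL_mul, eval_DopL_linForm (DopL_homogeneous hg hp), ih, mul_zero]

lemma eq_zero_of_pderiv {N e : ℕ} {g : MvPolynomial (Fin N) ℂ} (hg : g.IsHomogeneous e)
    (he : e ≠ 0) (h : ∀ i, pderiv i g = 0) : g = 0 := by
  have := hg.sum_X_mul_pderiv
  simp only [h, mul_zero, Finset.sum_const_zero] at this
  exact (smul_eq_zero.1 this.symm).resolve_left he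

/-! ### Injectivity of multiplication by a linear form -/

/-- Injectivity of `×L` on `A_{k-1}` propagates to all lower degrees: if `Lq = 0` in `A` then
`L Xₛ q = 0`, hence `Xₛ q = 0` for all `s`, so that `q(f)` is killed by all derivatives, and it
has positive degree. -/
lemma mul_injective_lower {N d r : ℕ} {f L : MvPolynomial (Fin N) ℂ} (hf : f.IsHomogeneous d)
    (hrd : r ≤ d)
    (hL : ∀ q ∈ homogeneousSubmodule (Fin N) ℂ r, DopL f (L * q) = 0 → DopL f q = 0)
    {i : ℕ} (hi : i ≤ r) :
    ∀ q ∈ homogeneousSubmodule (Fin N) ℂ i, DopL f (L * q) = 0 → DopL f q = 0 := by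
  induction hi using Nat.decreasingInduction with
  | self => exact hL
  | of_succ i hi ih =>
    intro q hq h
    refine eq_zero_of_pderiv (DopL_homogeneous hf hq) (by omega) fun s => ?_
    rw [← DopL_X_mul]
    refine ih _ ?_ ?_
    · rw [add_comm]
      exact (isHomogeneous_X ℂ s).mul hq
    · rw [mul_left_comm, DopL_X_mul, h, map_zero]

/-- If `×L : A_{k-1} → A_k` is injective then so is `×L^m : A_1 → A_{m+1}` for `m < k`. -/
lemma pow_mul_injective {N d r : ℕ} {f L : MvPolynomial (Fin N) ℂ} (hf : f.IsHomogeneous d)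
    (hrd : r ≤ d) (hL1 : L ∈ homogeneousSubmodule (Fin N) ℂ 1)
    (hL : ∀ q ∈ homogeneousSubmodule (Fin N) ℂ r, DopL f (L * q) = 0 → DopL f q = 0)
    {m : ℕ} (hm : m ≤ r) {q : MvPolynomial (Fin N) ℂ}
    (hq : q ∈ homogeneousSubmodule (Fin N) ℂ 1) (h : DopL f (L ^ m * q) = 0) : DopL f q = 0 := by
  induction m with
  | zero => simpa using h
  | succ m ih =>
    refine ih (by omega) (mul_injective_lower hf hrd hL (i := m + 1) hm _ ?_ ?_)
    · have := (IsHomogeneous.pow hL1 m).mul hq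
      simpa using this
    · rwa [← mul_assoc, ← pow_succ']

/-! ### A Jacobian criterion for algebraic independence -/

lemma pderiv_aeval {N : ℕ} {ι : Type*} [Fintype ι] (g : ι → MvPolynomial (Fin N) ℂ)
    (l : Fin N) (P : MvPolynomial ι ℂ) :
    pderiv l (aeval g P) = ∑ i, aeval g (pderiv i P) * pderiv l (g i) := by
  classical
  induction P using MvPolynomial.induction_on with
  | C a => simp [algebraMap_eq]
  | add p q hp hq => simp only [map_add, hp, hq, add_mul, Finset.sum_add_distrib]
  | mul_X p i hp =>
    rw [map_mul, aeval_X, pderiv_mul, hp, Finset.sum_mul]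
    have h1 : ∀ j, aeval g (pderiv j (p * X i)) * pderiv l (g j) =
        aeval g (pderiv j p) * pderiv l (g j) * g i +
          if j = i then aeval g p * pderiv l (g i) else 0 := by
      intro j
      rw [pderiv_mul, map_add, map_mul, map_mul, aeval_X]
      split_ifs with hj
      · subst hj
        rw [pderiv_X_self, map_one]
        ring
      · rw [pderiv_X_of_ne (Ne.symm hj), map_zero]
        ring
    simp only [h1, Finset.sum_add_distrib, Finset.sum_ite_eq', Finset.mem_univ, if_true]

/-- Polynomials with an invertible Jacobian matrix are algebraically independent: differentiating
a relation `P(g) = 0` of minimal degree gives relations `(∂P/∂yᵢ)(g) = 0` of smaller degree. -/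
lemma algebraicIndependent_of_jacobian {N : ℕ} (g : Fin N → MvPolynomial (Fin N) ℂ)
    (h : (Matrix.of fun i l => pderiv l (g i)).det ≠ 0) : AlgebraicIndependent ℂ g := by
  rw [algebraicIndependent_iff]
  suffices H : ∀ (D : ℕ) (P : MvPolynomial (Fin N) ℂ), P.totalDegree ≤ D → aeval g P = 0 → P = 0
    from fun P => H _ P le_rfl
  intro D
  induction D with
  | zero =>
    intro P hP h0
    rw [totalDegree_eq_zero_iff_eq_C.1 (Nat.le_zero.1 hP)] at h0 ⊢
    simpa [algebraMap_eq] using h0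
  | succ D ih =>
    intro P hP h0
    have hz : ∀ i, pderiv i P = 0 := by
      intro i
      refine ih _ ?_ ?_
      · refine Finset.sup_le fun m hm => ?_
        rw [MvPolynomial.mem_support_iff, coeff_pderiv] at hm
        have h1 := le_totalDegree (MvPolynomial.mem_support_iff.2 (left_ne_zero_of_mul hm))
        rw [Finsupp.sum_add_index' (fun _ => rfl) (fun _ _ _ => rfl),
          Finsupp.sum_single_index rfl] at h1
        omega
      · refine congrFun (Matrix.eq_zero_of_vecMul_eq_zero (v := fun i => aeval g (pderiv i P))
          h ?_) i
        funext l
        have := pderiv_aeval g l P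
        rw [h0, map_zero] at this
        exact this.symm
    have hC : P = C (coeff 0 P) := by
      ext m
      rw [coeff_C]
      split_ifs with hm
      · rw [hm]
      · obtain ⟨i, hi⟩ := Finsupp.ne_iff.1 (Ne.symm hm)
        have h2 := congrArg (coeff (m - Finsupp.single i 1)) (hz i)
        rw [coeff_pderiv, tsub_add_cancel_of_le, coeff_zero] at h2
        · exact (mul_eq_zero.1 h2).resolve_right (Nat.cast_add_one_ne_zero _)
        · simpa [Nat.one_le_iff_ne_zero] using hi
    rw [hC] at h0 ⊢
    simpa [algebraMap_eq] using h0

/-! ### Genericity and the proof -/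

/-- Injectivity of `v ↦ L_xᵐ v` on `A_1` is an open condition on `x`, so once it holds somewhere
it holds at a point where a given nonzero polynomial `H` does not vanish.  The point is found on a
line through `y`, where both conditions are nonvanishing of a polynomial in one variable. -/
lemma exists_generic_point {N : ℕ} (f : MvPolynomial (Fin N) ℂ) {H : MvPolynomial (Fin N) ℂ}
    (hH : H ≠ 0) (y : Fin N → ℂ) (m : ℕ)
    (hy : ∀ v, DopL f (linForm y ^ m * linForm v) = 0 → v = 0) :
    ∃ x, eval x H ≠ 0 ∧ ∀ v, DopL f (linForm x ^ m * linForm v) = 0 → v = 0 := by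
  obtain ⟨x₀, hx₀⟩ : ∃ x, eval x H ≠ 0 := by
    by_contra! hc
    exact hH (MvPolynomial.funext fun x => by rw [hc x, map_zero])
  set z := x₀ - y with hz
  let T : ℂ → (Fin N → ℂ) →ₗ[ℂ] MvPolynomial (Fin N) ℂ := fun t =>
    DopL f ∘ₗ LinearMap.mulLeft ℂ (linForm (y + t • z) ^ m) ∘ₗ linForm
  obtain ⟨G, hG⟩ := (T 0).exists_leftInverse_of_injective (by
    rw [LinearMap.ker_eq_bot']
    intro v hv
    exact hy v (by simpa [T] using hv))
  let M : Matrix (Fin N) (Fin N) (Polynomial ℂ) := Matrix.of fun i l =>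
    ∑ s ∈ Finset.range (m + 1),
      Polynomial.C (G (DopL f (linForm y ^ s * linForm z ^ (m - s) * (m.choose s : ℕ) *
        linForm (Pi.single l 1))) i) * Polynomial.X ^ (m - s)
  have hM : ∀ t, M.map (Polynomial.eval t) = LinearMap.toMatrix' (G ∘ₗ T t) := by
    intro t
    ext i l
    have hexp : linForm (y + t • z) ^ m * linForm (Pi.single l 1) =
        ∑ s ∈ Finset.range (m + 1), t ^ (m - s) •
          (linForm y ^ s * linForm z ^ (m - s) * ((m.choose s : ℕ) : MvPolynomial (Fin N) ℂ) *
            linForm (Pi.single l 1)) := by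
      rw [map_add, map_smul, add_pow, Finset.sum_mul]
      refine Finset.sum_congr rfl fun s _ => ?_
      rw [smul_pow]
      simp only [mul_smul_comm, smul_mul_assoc]
    simp only [M, Matrix.map_apply, Matrix.of_apply, Polynomial.eval_finsetSum,
      LinearMap.toMatrix'_apply, LinearMap.comp_apply, T, LinearMap.mulLeft_apply, hexp, map_sum,
      map_smul, Finset.sum_apply, Pi.smul_apply, Polynomial.eval_mul, Polynomial.eval_C,
      Polynomial.eval_pow, Polynomial.eval_X, smul_eq_mul]
    exact Finset.sum_congr rfl fun s _ => mul_comm _ _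
  have hdet : ∀ t, M.det.eval t = (LinearMap.toMatrix' (G ∘ₗ T t)).det := by
    intro t
    rw [← hM t, ← Polynomial.coe_evalRingHom, RingHom.map_det]
    rfl
  let P : Polynomial ℂ := aeval (fun i => Polynomial.C (y i) + Polynomial.X * Polynomial.C (z i)) H
  have hP : ∀ t, P.eval t = eval (y + t • z) H := by
    intro t
    simp only [P]
    rw [← Polynomial.coe_aeval_eq_eval, ← AlgHom.comp_apply, MvPolynomial.comp_aeval,
      MvPolynomial.aeval_eq_eval]
    congr 2
    funext i
    simp
    exact mul_comm _ _
  have hM0 : M.det ≠ 0 := by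
    intro h0
    have := hdet 0
    rw [h0, hG] at this
    simp at this
  have hP0 : P ≠ 0 := by
    intro h0
    have := hP 1
    rw [h0, one_smul, hz, add_sub_cancel, Polynomial.eval_zero] at this
    exact hx₀ this.symm
  obtain ⟨t, ht⟩ : ∃ t, (M.det * P).eval t ≠ 0 := by
    by_contra! hc
    exact mul_ne_zero hM0 hP0 (Polynomial.funext fun t => by rw [hc t, Polynomial.eval_zero])
  rw [Polynomial.eval_mul, hP, hdet] at ht
  refine ⟨y + t • z, right_ne_zero_of_mul ht, fun v hv => ?_⟩
  refine Matrix.eq_zero_of_mulVec_eq_zero (left_ne_zero_of_mul ht) ?_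
  rw [LinearMap.toMatrix'_mulVec]
  have hTv : T t v = 0 := hv
  rw [LinearMap.comp_apply, hTv, map_zero]

/-- **Corollary.** Let `f` be homogeneous of degree `d` with `V(f)` not a cone
(`Ann(f)_1 = 0`), and let `k ≤ ⌊d/2⌋` be the greatest integer such that
`×L : A_{k−1} → A_k` is injective for some `L ∈ A_1`.  Then for every `1 ≤ j ≤ k`:
if there are no `n+1` algebraically independent elements among the `j`-th order partial
derivatives of `f` (the `j`-th polar map is degenerate), then the `j`-th Hessian
determinant vanishes: for every family `B` of operators in `Q_j` whose images `B_u(f)`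
form a basis of the span of the `j`-th partials (i.e. whose classes form a basis of
`A(f)_j`), `det (B_u B_v (f)) = 0`. -/
theorem degenerate_polar_implies_higher_hessian_vanishes
    {n d k : ℕ} (f : MvPolynomial (Fin (n + 1)) ℂ) (hf : f.IsHomogeneous d)
    (hcone : homogeneousSubmodule (Fin (n + 1)) ℂ 1 ⊓ LinearMap.ker (DopL f) = ⊥)
    (hk1 : 1 ≤ k) (hkd : 2 * k ≤ d)
    (hinj : mulLinInjective f k)
    (hmax : ∀ k' : ℕ, 1 ≤ k' → 2 * k' ≤ d → mulLinInjective f k' → k' ≤ k) :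
    ∀ j : ℕ, 1 ≤ j → j ≤ k →
      (¬ ∃ g : Fin (n + 1) → MvPolynomial (Fin (n + 1)) ℂ,
          (∀ i, ∃ α : Fin (n + 1) → ℕ, (∑ t, α t) = j ∧ g i = pd α f) ∧
          AlgebraicIndependent ℂ g) →
      ∀ (a : ℕ) (B : Fin a → MvPolynomial (Fin (n + 1)) ℂ),
        (∀ u, B u ∈ homogeneousSubmodule (Fin (n + 1)) ℂ j) →
        LinearIndependent ℂ (fun u => DopL f (B u)) →
        Submodule.span ℂ (Set.range fun u => DopL f (B u)) =
          Submodule.span ℂ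
            {h | ∃ α : Fin (n + 1) → ℕ, (∑ t, α t) = j ∧ h = pd α f} →
        Matrix.det (Matrix.of fun u v => DopL f (B u * B v)) = 0 := by
  intro j hj1 hjk hdeg a B hB hli hspan
  by_contra hdet
  apply hdeg
  obtain ⟨L, hL1, hL⟩ := hinj
  obtain ⟨y, rfl⟩ := exists_linForm hL1
  have hlin0 : ∀ v : Fin (n + 1) → ℂ, DopL f (linForm v) = 0 → v = 0 := by
    intro v hv
    refine linForm_injective ((Submodule.mem_bot ℂ).1 ?_)
    rw [← hcone]
    exact ⟨linForm_mem v, hv⟩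
  obtain ⟨x, hx, hxinj⟩ := exists_generic_point f hdet y (j - 1) fun v hv =>
    hlin0 v (pow_mul_injective hf (by omega) hL1 hL (by omega) (linForm_mem v) hv)
  set S : Set (MvPolynomial (Fin (n + 1)) ℂ) :=
    {h | ∃ α : Fin (n + 1) → ℕ, (∑ t, α t) = j ∧ h = pd α f} with hS
  -- The Jacobian at `x` of the `j`-th polar map has trivial kernel.
  have hker : ∀ v : Fin (n + 1) → ℂ, (∀ h ∈ S, eval x (DopL h (linForm v)) = 0) → v = 0 := by
    intro v hv
    refine hxinj v ?_
    have hw : linForm x ^ (j - 1) * linForm v ∈ homogeneousSubmodule (Fin (n + 1)) ℂ j := by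
      have := (IsHomogeneous.pow (linForm_mem x) (j - 1)).mul (linForm_mem v)
      rwa [one_mul, Nat.sub_add_cancel hj1] at this
    have hvB : ∀ u, eval x (DopL f (linForm v * B u)) = 0 := by
      intro u
      rw [DopL_mul, DopL_linForm, map_sum]
      have hle : Submodule.span ℂ S ≤ LinearMap.ker
          ((aeval x : MvPolynomial (Fin (n + 1)) ℂ →ₐ[ℂ] ℂ).toLinearMap ∘ₗ
            ∑ i, v i • (pderiv i).toLinearMap) := by
        rw [Submodule.span_le]
        intro h hh
        have := hv h hh
        rw [DopL_linForm] at this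
        simpa [aeval_eq_eval] using this
      have := hle (DopL_mem_span f (hB u))
      simpa [aeval_eq_eval] using this
    have hwB : ∀ u, eval x (DopL f (linForm x ^ (j - 1) * linForm v * B u)) = 0 := by
      intro u
      rw [mul_assoc, DopL_mul]
      exact eval_DopL_linForm_pow
        (DopL_homogeneous hf ((linForm_mem v).mul (hB u))) x (hvB u) _
    have hmem := DopL_mem_span f hw
    rw [← hS, ← hspan] at hmem
    obtain ⟨c, hc⟩ := (Submodule.mem_span_range_iff_exists_fun ℂ).1 hmem
    -- `c` holds the coordinates of `L_x^{j-1} v ∈ A_j`, and lies in the kernel of the Hessian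
    -- matrix at `x`.
    have hc0 : c = 0 := by
      rw [RingHom.map_det] at hx
      refine Matrix.eq_zero_of_vecMul_eq_zero hx ?_
      funext u
      have h1 : DopL f (linForm x ^ (j - 1) * linForm v * B u) =
          ∑ s, c s • DopL f (B s * B u) := by
        rw [mul_comm, DopL_mul, ← hc]
        have : ∀ g : Fin a → MvPolynomial (Fin (n + 1)) ℂ,
            DopL (∑ s, c s • DopL f (g s)) (B u) = ∑ s, c s • DopL f (B u * g s) := by
          intro g
          rw [show (∑ s, c s • DopL f (g s)) = DopL f (∑ s, c s • g s) by simp, ← DopL_mul,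
            Finset.mul_sum, map_sum]
          simp
        rw [this]
        simp only [mul_comm]
      have h2 := hwB u
      rw [h1] at h2
      simpa [Matrix.vecMul, dotProduct, smul_eval] using h2
    rw [← hc, hc0]
    simp
  -- So the gradients at `x` of the `j`-th partials span `ℂ^{n+1}`; a basis among them gives the
  -- algebraically independent partials.
  let grad : MvPolynomial (Fin (n + 1)) ℂ → Fin (n + 1) → ℂ := fun h i => eval x (pderiv i h)
  have htop : Submodule.span ℂ (grad '' S) = ⊤ := by
    by_contra hne
    obtain ⟨φ, hφ, hle⟩ := Submodule.exists_le_ker_of_lt_top _ (lt_top_iff_ne_top.2 hne)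
    apply hφ
    have hφv : ∀ w : Fin (n + 1) → ℂ, φ w = ∑ i, φ (Pi.single i 1) * w i := by
      intro w
      conv_lhs => rw [pi_eq_sum_univ' w]
      simp [mul_comm]
    have h0 := hker (fun i => φ (Pi.single i 1)) fun h hh => by
      have : φ (grad h) = 0 := hle (Submodule.subset_span ⟨h, hh, rfl⟩)
      rw [hφv] at this
      simpa [DopL_linForm, smul_eval, grad] using this
    apply LinearMap.ext
    intro w
    rw [hφv]
    simp only [fun i => congrFun h0 i]
    simp
  have hrank : finrank ℂ (Submodule.span ℂ (grad '' S)) = n + 1 := by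
    rw [htop, finrank_top, finrank_fin_fun]
  obtain ⟨b, hbS, -, hbli⟩ := Submodule.exists_fun_fin_finrank_span_eq ℂ (grad '' S)
  choose g hgS hgb using fun i : Fin (n + 1) => hbS (Fin.cast hrank.symm i)
  refine ⟨g, hgS, algebraicIndependent_of_jacobian g fun hJ => ?_⟩
  have hli' : LinearIndependent ℂ fun i => grad (g i) := by
    simp only [hgb]
    exact hbli.comp _ (Fin.cast_injective _)
  have hunit : IsUnit (Matrix.of fun i => grad (g i)) :=
    Matrix.linearIndependent_rows_iff_isUnit.1 hli'
  rw [Matrix.isUnit_iff_isUnit_det] at hunit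
  apply hunit.ne_zero
  have := congrArg (eval x) hJ
  rw [RingHom.map_det, map_zero] at this
  exact this
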